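/- Let f_t = 1{a·x > t} be a halfspace on {-1,1}^n with a_1 ≥ a_2 ≥ ... ≥ a_n > 0 and E[f_t] ≤ 1/2. Then (1/2)·I_1(f_t) ≤ VB₁(f_t) ≤ (7/4)·I_1(f_t), where VB₁(f) = Pr_x[f(x) = 1 and there exists i with f(x ⊕ e_i) = 0] is the measure of the inner vertex boundary. -/

import Mathlib

open Finset

noncomputable section
open scoped Classical

/-- The ±1 value associated to a Boolean bit. -/
def sgn1 (b : Bool) : ℝ := if b then 1 else -1

/-- Probability of an event under the uniform measure on `{-1,1}^n`. -/
def cubePr (n : ℕ) (P : (Fin n → Bool) → Prop) : ℝ :=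
  ((univ.filter P).card : ℝ) / 2 ^ n

/-- Expectation of a function under the uniform measure on `{-1,1}^n`. -/
def cubeE (n : ℕ) (f : (Fin n → Bool) → ℝ) : ℝ := (∑ x, f x) / 2 ^ n

/-- The linear form `a · x = ∑ aᵢ xᵢ` on `{-1,1}^n`. -/
def lin (n : ℕ) (a : Fin n → ℝ) (x : Fin n → Bool) : ℝ := ∑ i, a i * sgn1 (x i)

/-- The halfspace `1{a · x > t}` as a 0/1-valued function. -/
def halfspace (n : ℕ) (a : Fin n → ℝ) (t : ℝ) (x : Fin n → Bool) : ℝ :=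
  if t < lin n a x then 1 else 0

/-- The influence of coordinate `i` on `f`: the probability that flipping
coordinate `i` changes the value of `f`. -/
def infl (n : ℕ) (i : Fin n) (f : (Fin n → Bool) → ℝ) : ℝ :=
  cubePr n (fun x => f x ≠ f (Function.update x i (!x i)))

/-- The degree-1 Fourier coefficient `f̂({i}) = E[f(x)·xᵢ]`. -/
def fCoeff (n : ℕ) (f : (Fin n → Bool) → ℝ) (i : Fin n) : ℝ :=
  cubeE n (fun x => f x * sgn1 (x i))

/-- The degree-1 Fourier weight `W¹(f) = ∑ᵢ f̂({i})²`. -/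
def W1 (n : ℕ) (f : (Fin n → Bool) → ℝ) : ℝ := ∑ i, (fCoeff n f i) ^ 2

/-!
Counting sign vectors, `2 ^ n * I₁` is twice the number of `y ∈ {-1,1}^(n-1)` for which
`∑_{i ≥ 2} aᵢ yᵢ` lies in the window `(t - a₁, t + a₁]`. A point of the halfspace is on the inner
boundary iff flipping its first positive coordinate leaves the halfspace, so the size of the
boundary is a sum over the position `k` of that coordinate; the summand `k = 1` is the window count
above, which gives the lower bound. For the upper bound, widen all windows downwards to radius
`c = a₁`. The summands become window counts `F₀, F₁, …`, where `F_k` drops the first `k` of the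
weights `a₂, a₃, …` and moves the centre up from `t` by their sum. Flipping the signs of a walk
until it first reaches a given level (a reflection principle) yields `2 F_{k+2} ≤ F_k` and
`4 F₁ ≤ 3 F₀`, hence `∑ F_k ≤ 2 F₀ + 2 F₁ ≤ (7/2) F₀`. A negative threshold `t` with
`E[f_t] ≤ 1/2` defines the same halfspace as `t = 0`.
-/

section Halfspace

variable {n : ℕ}

/-- The number of sign vectors `x ∈ {-1,1}^n` with `∑ aᵢ xᵢ ∈ S`. -/
def sumCount (a : Fin n → ℝ) (S : Set ℝ) : ℕ := #{x | lin n a x ∈ S}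

/-- The number of sign vectors whose weighted sum lies in the window of radius `c` about `t`,
half-open so as to match the strict inequality in `halfspace`. -/
def windowCount (a : Fin n → ℝ) (c t : ℝ) : ℕ := sumCount a (Set.Ioc (t - c) (t + c))

/-- The inner vertex boundary of `{a · x > t}`: the points of the halfspace that some
single-coordinate flip takes out of it. -/
def innerBoundary (a : Fin n → ℝ) (t : ℝ) : Finset (Fin n → Bool) :=
  {x | t < lin n a x ∧ ∃ i, lin n a (Function.update x i (!x i)) ≤ t}

theorem lin_succ (a : Fin (n + 1) → ℝ) (x : Fin (n + 1) → Bool) :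
    lin (n + 1) a x = a 0 * sgn1 (x 0) + lin n (Fin.tail a) (Fin.tail x) :=
  Fin.sum_univ_succ _

theorem sgn1_not (b : Bool) : sgn1 (!b) = -sgn1 b := by
  cases b <;> simp [sgn1]

theorem mul_sgn1_le_abs (r : ℝ) (b : Bool) : r * sgn1 b ≤ |r| := by
  cases b <;> simp [sgn1, le_abs_self, neg_le_abs]

theorem lin_update_not (a : Fin n → ℝ) (x : Fin n → Bool) (i : Fin n) :
    lin n a (Function.update x i (!x i)) = lin n a x - 2 * (a i * sgn1 (x i)) := by
  have hdiff : lin n a (Function.update x i (!x i)) - lin n a x = -2 * (a i * sgn1 (x i)) := by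
    unfold lin
    rw [← sum_sub_distrib, Fintype.sum_eq_single i]
    · rw [Function.update_self, sgn1_not]
      ring
    · intro j hj
      rw [Function.update_of_ne hj, sub_self]
  linarith

theorem lin_not (a : Fin n → ℝ) (x : Fin n → Bool) : lin n a (fun i ↦ !x i) = -lin n a x := by
  simp only [lin, sgn1_not, mul_neg, sum_neg_distrib]

theorem card_eq_card_cons_true_add_card_cons_false (s : Finset (Fin (n + 1) → Bool)) :
    #s = #{y : Fin n → Bool | Fin.cons true y ∈ s} +
      #{y : Fin n → Bool | Fin.cons false y ∈ s} := by
  have hsum : #s = ∑ x, if x ∈ s then 1 else 0 := by simp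
  rw [hsum, ← (Fin.consEquiv fun _ : Fin (n + 1) ↦ Bool).sum_comp, Fintype.sum_prod_type,
    Fintype.sum_bool, card_filter, card_filter]
  rfl

theorem cubePr_eq_card_div {P : (Fin n → Bool) → Prop} {s : Finset (Fin n → Bool)}
    (h : ∀ x, P x ↔ x ∈ s) : cubePr n P = #s / 2 ^ n := by
  have hs : univ.filter P = s := by
    ext x
    simp [h]
  rw [cubePr, hs]

theorem sumCount_mono (a : Fin n → ℝ) {S T : Set ℝ} (h : S ⊆ T) : sumCount a S ≤ sumCount a T :=
  card_le_card <| monotone_filter_right _ fun _ _ hx ↦ h hx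

theorem sumCount_le_add_of_subset_union (a : Fin n → ℝ) {S T U : Set ℝ} (h : S ⊆ T ∪ U) :
    sumCount a S ≤ sumCount a T + sumCount a U :=
  (sumCount_mono a h).trans <| by
    simpa only [sumCount, Set.mem_union, filter_or] using card_union_le _ _

theorem sumCount_Ioc_le_add (a : Fin n → ℝ) {u v v' w : ℝ} (h : v' ≤ v) :
    sumCount a (Set.Ioc u w) ≤ sumCount a (Set.Ioc u v) + sumCount a (Set.Ioc v' w) :=
  sumCount_le_add_of_subset_union a <| Set.Ioc_subset_Ioc_union_Ioc.trans <|
    Set.union_subset_union_right _ (Set.Ioc_subset_Ioc_left h)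

theorem sumCount_succ (a : Fin (n + 1) → ℝ) (S : Set ℝ) :
    sumCount a S = sumCount (Fin.tail a) ((a 0 + ·) ⁻¹' S) +
      sumCount (Fin.tail a) ((-a 0 + ·) ⁻¹' S) := by
  rw [sumCount, card_eq_card_cons_true_add_card_cons_false]
  simp [sumCount, lin_succ, sgn1]

theorem windowCount_succ (a : Fin (n + 1) → ℝ) (c t : ℝ) :
    windowCount a c t =
      windowCount (Fin.tail a) c (t - a 0) + windowCount (Fin.tail a) c (t + a 0) := by
  simp only [windowCount, sumCount_succ, Set.preimage_const_add_Ioc]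
  ring_nf

theorem windowCount_le_add_sumCount_Ioc (a : Fin n → ℝ) {c s t : ℝ} (hst : s ≤ t) :
    windowCount a c t ≤ windowCount a c s + sumCount a (Set.Ioc (s + c) (t + c)) :=
  sumCount_le_add_of_subset_union a <| Set.Ioc_subset_Ioc_union_Ioc.trans <|
    Set.union_subset_union_left _ (Set.Ioc_subset_Ioc_left (by linarith))

theorem windowCount_add_le_of_radius_le (a : Fin n → ℝ) {r c : ℝ} (hrc : r ≤ c) (t : ℝ) :
    windowCount a r (t + c) ≤ windowCount a c (t + r) :=
  sumCount_mono a <| Set.Ioc_subset_Ioc (by linarith) (by linarith)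

/-- Read the weights as the steps of a walk and flip the signs of the steps until the walk first
reaches level `h`. The level reached is less than `h + d`, so the final position `x` moves into
`(x - 2 * h - 2 * d, x - 2 * h]`; a walk that never reaches `h` is negated altogether. This map is
injective, since the flipped walk first reaches `-h` at the same time. -/
theorem sumCount_le_of_reflection {a : Fin n → ℝ} {d h : ℝ} {S T : Set ℝ}
    (ha : ∀ i, |a i| ≤ d) (hh : 0 < h)
    (hreach : ∀ x ∈ S, Set.Ioc (x - 2 * h - 2 * d) (x - 2 * h) ⊆ T)
    (hmiss : ∀ x ∈ S, x < h → -x ∈ T) : sumCount a S ≤ sumCount a T := by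
  induction n generalizing h S T with
  | zero =>
    refine card_le_card <| monotone_filter_right _ fun x _ (hx : lin 0 a x ∈ S) ↦ ?_
    have hlin : lin 0 a x = 0 := by simp [lin]
    rw [hlin] at hx ⊢
    simpa using hmiss 0 hx hh
  | succ n ih =>
    have step (e : ℝ) (he : |e| ≤ d) : sumCount (Fin.tail a) ((e + ·) ⁻¹' S) ≤
        sumCount (Fin.tail a) ((-e + ·) ⁻¹' T) := by
      have hed : e ≤ d := (abs_le.1 he).2
      rcases le_or_gt h e with hhe | hhe
      · refine sumCount_mono _ fun s hs ↦ hreach _ hs ⟨?_, ?_⟩ <;> linarith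
      · refine ih (h := h - e) (fun i ↦ ha i.succ) (sub_pos.2 hhe) ?_ ?_
        · rintro x hx y ⟨hy, hy'⟩
          refine hreach _ hx ⟨?_, ?_⟩ <;> linarith
        · intro x hx hxh
          simpa [add_comm] using hmiss _ hx (by linarith)
    have hminus := step (-a 0) (by rw [abs_neg]; exact ha 0)
    rw [neg_neg] at hminus
    rw [sumCount_succ, sumCount_succ, add_comm]
    exact add_le_add hminus (step _ (ha 0))

theorem sumCount_Ioc_le_of_reflection {a : Fin n → ℝ} {d h u v u' v' : ℝ}
    (ha : ∀ i, |a i| ≤ d) (hh : 0 < h) (hlower : u' ≤ u - 2 * h - 2 * d) (hupper : v - 2 * h ≤ v')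
    (hneg_lower : u < h → u' ≤ -h) (hneg_upper : -u ≤ v') :
    sumCount a (Set.Ioc u v) ≤ sumCount a (Set.Ioc u' v') := by
  refine sumCount_le_of_reflection ha hh ?_ ?_
  · rintro x ⟨hux, hxv⟩
    exact Set.Ioc_subset_Ioc (by linarith) (by linarith)
  · rintro x ⟨hux, -⟩ hxh
    have := hneg_lower (hux.trans hxh)
    constructor <;> linarith

section WindowInequalities

variable {w : Fin n → ℝ} {a b c t : ℝ}

theorem windowCount_add_add_le (hw : ∀ i, |w i| ≤ b) (hb : 0 < b) (hba : b ≤ a) (hac : a ≤ c)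
    (ht : 0 ≤ t) :
    windowCount w c (t + a + b) ≤
      windowCount w c (t - a + b) + windowCount w c (t - a - b) + windowCount w c (t + a - b) := by
  have hsplit : windowCount w c (t + a + b) ≤
      windowCount w c (t - a + b) + sumCount w (Set.Ioc (t - a + b + c) (t + a + b + c)) :=
    windowCount_le_add_sumCount_Ioc w (by linarith)
  have hreflect : sumCount w (Set.Ioc (t - a + b + c) (t + a + b + c)) ≤
      sumCount w (Set.Ioc (t - a - b - c) (t + a - b + c)) := by
    apply sumCount_Ioc_le_of_reflection hw hb <;> intros <;> linarith
  have hcover : sumCount w (Set.Ioc (t - a - b - c) (t + a - b + c)) ≤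
      windowCount w c (t - a - b) + windowCount w c (t + a - b) :=
    sumCount_Ioc_le_add w (by linarith)
  linarith

theorem windowCount_add_add_le_two_mul_add (hw : ∀ i, |w i| ≤ b) (hb : 0 ≤ b) (hba : b ≤ a)
    (ha : 0 < a) (hac : a ≤ c) (ht : 0 ≤ t) :
    windowCount w c (t + a + b) ≤
      2 * windowCount w c (t - a + b) + windowCount w c (t - a - b) := by
  have hsplit : windowCount w c (t + a + b) ≤
      windowCount w c (t - a + b) + sumCount w (Set.Ioc (t - a + b + c) (t + a + b + c)) :=
    windowCount_le_add_sumCount_Ioc w (by linarith)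
  have hreflect : sumCount w (Set.Ioc (t - a + b + c) (t + a + b + c)) ≤
      sumCount w (Set.Ioc (t - a - b - c) (t - a + b + c)) := by
    apply sumCount_Ioc_le_of_reflection hw ha <;> intros <;> linarith
  have hcover : sumCount w (Set.Ioc (t - a - b - c) (t - a + b + c)) ≤
      windowCount w c (t - a - b) + windowCount w c (t - a + b) :=
    sumCount_Ioc_le_add w (by linarith)
  linarith

theorem windowCount_add_sub_le_add_two_mul (hw : ∀ i, |w i| ≤ b) (hb : 0 ≤ b) (hba : b ≤ a)
    (ha : 0 < a) (hac : a ≤ c) (ht : 0 ≤ t) :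
    windowCount w c (t + a - b) ≤
      windowCount w c (t - a + b) + 2 * windowCount w c (t - a - b) := by
  have hsplit : windowCount w c (t + a - b) ≤
      windowCount w c (t - a - b) + sumCount w (Set.Ioc (t - a - b + c) (t + a - b + c)) :=
    windowCount_le_add_sumCount_Ioc w (by linarith)
  have hsplit' : sumCount w (Set.Ioc (t - a - b + c) (t + a - b + c)) ≤
      sumCount w (Set.Ioc (t - a - b + c) (t - a + b + c)) +
        sumCount w (Set.Ioc (t - a + b + c) (t + a - b + c)) :=
    sumCount_Ioc_le_add w le_rfl
  have hmiddle : sumCount w (Set.Ioc (t - a - b + c) (t - a + b + c)) ≤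
      windowCount w c (t - a + b) :=
    sumCount_mono w <| Set.Ioc_subset_Ioc_left (by linarith)
  have hreflect : sumCount w (Set.Ioc (t - a + b + c) (t + a - b + c)) ≤
      windowCount w c (t - a - b) := by
    apply sumCount_Ioc_le_of_reflection hw ha <;> intros <;> linarith
  linarith

end WindowInequalities

theorem antitone_tail {α : Type*} [Preorder α] {a : Fin (n + 1) → α} (ha : Antitone a) :
    Antitone (Fin.tail a) :=
  ha.comp_monotone Fin.strictMono_succ.monotone

theorem abs_le_apply_zero {a : Fin (n + 1) → ℝ} (ha : Antitone a) (hpos : ∀ i, 0 < a i)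
    (i : Fin (n + 1)) : |a i| ≤ a 0 :=
  (abs_of_pos (hpos i)).trans_le (ha (Fin.zero_le i))

theorem two_mul_windowCount_tail_tail_le {a : Fin (n + 2) → ℝ} {c t : ℝ} (ha : Antitone a)
    (hpos : ∀ i, 0 < a i) (hac : a 0 ≤ c) (ht : 0 ≤ t) :
    2 * windowCount (Fin.tail (Fin.tail a)) c (t + a 0 + a 1) ≤ windowCount a c t := by
  have hbound (i : Fin n) : |Fin.tail (Fin.tail a) i| ≤ a 1 :=
    abs_le_apply_zero (antitone_tail ha) (fun i ↦ hpos i.succ) i.succ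
  have hwindow := windowCount_add_add_le hbound (hpos 1) (ha (Fin.zero_le 1)) hac ht
  have htail : Fin.tail a 0 = a 1 := rfl
  simp only [windowCount_succ, htail]
  linarith

theorem four_mul_windowCount_tail_le {a : Fin (n + 1) → ℝ} {c t : ℝ} (ha : Antitone a)
    (hpos : ∀ i, 0 < a i) (hac : a 0 ≤ c) (ht : 0 ≤ t) :
    4 * windowCount (Fin.tail a) c (t + a 0) ≤ 3 * windowCount a c t := by
  suffices windowCount (Fin.tail a) c (t + a 0) ≤ 3 * windowCount (Fin.tail a) c (t - a 0) by
    rw [windowCount_succ a]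
    linarith
  cases n with
  | zero =>
    have hwindow := windowCount_add_add_le_two_mul_add (w := Fin.tail a) (b := 0)
      (fun i ↦ i.elim0) le_rfl (hpos 0).le (hpos 0) hac ht
    simp only [add_zero, sub_zero] at hwindow
    linarith
  | succ n =>
    have hbound (i : Fin n) : |Fin.tail (Fin.tail a) i| ≤ a 1 :=
      abs_le_apply_zero (antitone_tail ha) (fun i ↦ hpos i.succ) i.succ
    have h10 : a 1 ≤ a 0 := ha (Fin.zero_le 1)
    have hplus := windowCount_add_add_le_two_mul_add hbound (hpos 1).le h10 (hpos 0) hac ht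
    have hminus := windowCount_add_sub_le_add_two_mul hbound (hpos 1).le h10 (hpos 0) hac ht
    have htail : Fin.tail a 0 = a 1 := rfl
    simp only [windowCount_succ (Fin.tail a), htail]
    linarith

theorem cons_true_mem_innerBoundary_iff {a : Fin (n + 1) → ℝ} (ha : ∀ i, |a i| ≤ a 0) {t : ℝ}
    {y : Fin n → Bool} :
    (Fin.cons true y : Fin (n + 1) → Bool) ∈ innerBoundary a t ↔
      lin n (Fin.tail a) y ∈ Set.Ioc (t - a 0) (t + a 0) := by
  have hlin : lin (n + 1) a (Fin.cons true y) = a 0 + lin n (Fin.tail a) y := by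
    simp [lin_succ, sgn1]
  simp only [innerBoundary, mem_filter_univ, lin_update_not, hlin, Set.mem_Ioc]
  constructor
  · rintro ⟨hlt, i, hi⟩
    have := (mul_sgn1_le_abs (a i) ((Fin.cons true y : Fin (n + 1) → Bool) i)).trans (ha i)
    constructor <;> linarith
  · rintro ⟨hlt, hle⟩
    refine ⟨by linarith, 0, ?_⟩
    rw [Fin.cons_zero, sgn1, if_pos rfl]
    linarith

theorem cons_false_mem_innerBoundary_iff {a : Fin (n + 1) → ℝ} (ha : 0 ≤ a 0) {t : ℝ}
    {y : Fin n → Bool} :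
    (Fin.cons false y : Fin (n + 1) → Bool) ∈ innerBoundary a t ↔
      y ∈ innerBoundary (Fin.tail a) (t + a 0) := by
  have hlin : lin (n + 1) a (Fin.cons false y) = -a 0 + lin n (Fin.tail a) y := by
    simp [lin_succ, sgn1]
  have hsgn : sgn1 false = -1 := by simp [sgn1]
  simp only [innerBoundary, mem_filter_univ, lin_update_not, hlin, Fin.exists_fin_succ,
    Fin.cons_zero, Fin.cons_succ, hsgn, Fin.tail]
  constructor
  · rintro ⟨hlt, hzero | ⟨i, hi⟩⟩
    · linarith
    · exact ⟨by linarith, i, by linarith⟩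
  · rintro ⟨hlt, i, hi⟩
    exact ⟨by linarith, .inr ⟨i, by linarith⟩⟩

theorem card_innerBoundary_succ {a : Fin (n + 1) → ℝ} (ha : ∀ i, |a i| ≤ a 0) (t : ℝ) :
    #(innerBoundary a t) =
      windowCount (Fin.tail a) (a 0) t + #(innerBoundary (Fin.tail a) (t + a 0)) := by
  rw [card_eq_card_cons_true_add_card_cons_false]
  simp only [cons_true_mem_innerBoundary_iff ha,
    cons_false_mem_innerBoundary_iff ((abs_nonneg _).trans (ha 0)), filter_univ_mem,
    windowCount, sumCount]
  congr!

theorem innerBoundary_fin_zero (a : Fin 0 → ℝ) (t : ℝ) : innerBoundary a t = ∅ := by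
  simp [innerBoundary]

/-- In the notation `F_k` above, the boundary has at most `F₁ + F₂ + ⋯` points, and the induction
sums this series by `2 F_{k+2} ≤ F_k`. -/
theorem card_innerBoundary_add_le {a : Fin (n + 1) → ℝ} {c t : ℝ} (ha : Antitone a)
    (hpos : ∀ i, 0 < a i) (hac : a 0 ≤ c) (ht : 0 ≤ t) :
    #(innerBoundary a (t + c)) ≤
      windowCount a c t + 2 * windowCount (Fin.tail a) c (t + a 0) := by
  induction n generalizing t with
  | zero =>
    have hfirst := windowCount_add_le_of_radius_le (Fin.tail a) hac t
    rw [card_innerBoundary_succ (abs_le_apply_zero ha hpos), innerBoundary_fin_zero, card_empty]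
    linarith
  | succ n ih =>
    have hfirst := windowCount_add_le_of_radius_le (Fin.tail a) hac t
    have h10 : Fin.tail a 0 ≤ a 0 := ha (Fin.zero_le 1)
    have hrest := ih (t := t + a 0) (antitone_tail ha) (fun i ↦ hpos i.succ) (h10.trans hac)
      (add_nonneg ht (hpos 0).le)
    have hhalf : 2 * windowCount (Fin.tail (Fin.tail a)) c (t + a 0 + Fin.tail a 0) ≤
        windowCount a c t :=
      two_mul_windowCount_tail_tail_le ha hpos hac ht
    rw [card_innerBoundary_succ (abs_le_apply_zero ha hpos), add_right_comm t c]
    linarith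

theorem two_mul_card_innerBoundary_le {a : Fin (n + 1) → ℝ} {t : ℝ} (ha : Antitone a)
    (hpos : ∀ i, 0 < a i) (ht : 0 ≤ t) :
    2 * #(innerBoundary a t) ≤ 7 * windowCount (Fin.tail a) (a 0) t := by
  rw [card_innerBoundary_succ (abs_le_apply_zero ha hpos)]
  cases n with
  | zero =>
    rw [innerBoundary_fin_zero, card_empty]
    linarith
  | succ n =>
    have htail_anti := antitone_tail ha
    have htail_pos (i : Fin (n + 1)) : 0 < Fin.tail a i := hpos i.succ
    have h10 : Fin.tail a 0 ≤ a 0 := ha (Fin.zero_le 1)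
    have hsum := card_innerBoundary_add_le htail_anti htail_pos h10 ht
    have hratio := four_mul_windowCount_tail_le htail_anti htail_pos h10 ht
    linarith

theorem halfspace_eq_one_iff {a : Fin n → ℝ} {t : ℝ} {x : Fin n → Bool} :
    halfspace n a t x = 1 ↔ t < lin n a x := by
  simp [halfspace]

theorem halfspace_eq_zero_iff {a : Fin n → ℝ} {t : ℝ} {x : Fin n → Bool} :
    halfspace n a t x = 0 ↔ lin n a x ≤ t := by
  simp [halfspace]

theorem cubePr_innerBoundary (a : Fin n → ℝ) (t : ℝ) :
    cubePr n (fun x ↦ halfspace n a t x = 1 ∧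
      ∃ i, halfspace n a t (Function.update x i (!x i)) = 0) = #(innerBoundary a t) / 2 ^ n :=
  cubePr_eq_card_div fun x ↦ by
    simp only [halfspace_eq_one_iff, halfspace_eq_zero_iff, innerBoundary, mem_filter_univ]

theorem halfspace_ne_halfspace_update_not_iff {a : Fin n → ℝ} {i : Fin n} (hi : 0 ≤ a i) {t : ℝ}
    {x : Fin n → Bool} :
    halfspace n a t x ≠ halfspace n a t (Function.update x i (!x i)) ↔
      lin n a x - a i * sgn1 (x i) ∈ Set.Ioc (t - a i) (t + a i) := by
  simp only [halfspace, lin_update_not, Set.mem_Ioc]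
  cases x i <;> simp only [sgn1] <;> split_ifs <;> grind

theorem infl_zero_halfspace {a : Fin (n + 1) → ℝ} (ha : 0 ≤ a 0) (t : ℝ) :
    infl (n + 1) 0 (halfspace (n + 1) a t) =
      2 * windowCount (Fin.tail a) (a 0) t / 2 ^ (n + 1) := by
  have hpivotal (x : Fin (n + 1) → Bool) :
      halfspace (n + 1) a t x ≠ halfspace (n + 1) a t (Function.update x 0 (!x 0)) ↔
        x ∈ ({x | lin n (Fin.tail a) (Fin.tail x) ∈ Set.Ioc (t - a 0) (t + a 0)} : Finset _) := by
    rw [halfspace_ne_halfspace_update_not_iff ha, lin_succ, add_sub_cancel_left, mem_filter_univ]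
  rw [infl, cubePr_eq_card_div hpivotal, card_eq_card_cons_true_add_card_cons_false]
  simp only [mem_filter_univ, Fin.tail_cons, windowCount, sumCount]
  push_cast
  rw [two_mul]
  congr!

theorem sum_halfspace_not (a : Fin n → ℝ) (t : ℝ) :
    ∑ x : Fin n → Bool, halfspace n a t (fun i ↦ !x i) = ∑ x, halfspace n a t x :=
  (Equiv.piCongrRight fun _ : Fin n ↦ Equiv.boolNot).sum_comp (halfspace n a t)

/-- The sum is at least `1` everywhere because `t < 0`, and at most `1` on average. -/
theorem halfspace_add_halfspace_not_eq_one {a : Fin n → ℝ} {t : ℝ} (ht : t < 0)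
    (hμ : cubeE n (halfspace n a t) ≤ 1 / 2) (x : Fin n → Bool) :
    halfspace n a t x + halfspace n a t (fun i ↦ !x i) = 1 := by
  have hnonneg (y : Fin n → Bool) :
      0 ≤ halfspace n a t y + halfspace n a t (fun i ↦ !y i) - 1 := by
    simp only [halfspace, lin_not]
    split_ifs <;> linarith
  have hsum :
      ∑ y : Fin n → Bool, (halfspace n a t y + halfspace n a t (fun i ↦ !y i) - 1) ≤ 0 := by
    rw [cubeE, div_le_iff₀ (by positivity)] at hμ
    have hcard : ∑ _y : Fin n → Bool, (1 : ℝ) = 2 ^ n := by simp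
    rw [sum_sub_distrib, sum_add_distrib, sum_halfspace_not, hcard]
    linarith
  have hzero := (sum_eq_zero_iff_of_nonneg fun y _ ↦ hnonneg y).1
    (hsum.antisymm (sum_nonneg fun y _ ↦ hnonneg y)) x (mem_univ x)
  linarith

theorem halfspace_eq_halfspace_zero {a : Fin n → ℝ} {t : ℝ} (ht : t < 0)
    (hμ : cubeE n (halfspace n a t) ≤ 1 / 2) : halfspace n a t = halfspace n a 0 := by
  funext x
  rcases lt_or_ge 0 (lin n a x) with hx | hx
  · rw [halfspace_eq_one_iff.2 hx, halfspace_eq_one_iff.2 (ht.trans hx)]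
  · have hnot : halfspace n a t (fun i ↦ !x i) = 1 := by
      rw [halfspace_eq_one_iff, lin_not]
      linarith
    have hone := halfspace_add_halfspace_not_eq_one ht hμ x
    rw [halfspace_eq_zero_iff.2 hx]
    linarith

theorem exists_nonneg_halfspace_eq {a : Fin n → ℝ} {t : ℝ}
    (hμ : cubeE n (halfspace n a t) ≤ 1 / 2) : ∃ s, 0 ≤ s ∧ halfspace n a t = halfspace n a s := by
  rcases le_or_gt 0 t with ht | ht
  · exact ⟨t, ht, rfl⟩
  · exact ⟨0, le_rfl, halfspace_eq_halfspace_zero ht hμ⟩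

end Halfspace

/-- **The inner vertex boundary of a halfspace is comparable to the first
influence.** For a halfspace `f_t = 1{a·x > t}` with `a₁ ≥ ... ≥ aₙ > 0` and
`E[f_t] ≤ 1/2`: `(1/2)·I₁(f_t) ≤ VB₁(f_t) ≤ (7/4)·I₁(f_t)`, where `VB₁(f)` is
the probability that `f(x) = 1` and some single-coordinate flip changes `f`. -/
theorem vertex_boundary_halfspace (n : ℕ) (hn : 0 < n) (a : Fin n → ℝ) (t : ℝ)
    (ha : ∀ i, 0 < a i) (hmono : ∀ i j : Fin n, i ≤ j → a j ≤ a i)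
    (hμ : cubeE n (halfspace n a t) ≤ 1 / 2) :
    (1 / 2) * infl n ⟨0, hn⟩ (halfspace n a t) ≤
        cubePr n (fun x => halfspace n a t x = 1 ∧
          ∃ i, halfspace n a t (Function.update x i (!x i)) = 0) ∧
      cubePr n (fun x => halfspace n a t x = 1 ∧
          ∃ i, halfspace n a t (Function.update x i (!x i)) = 0) ≤
        (7 / 4) * infl n ⟨0, hn⟩ (halfspace n a t) := by
  obtain ⟨m, rfl⟩ := Nat.exists_eq_add_one.2 hn
  obtain ⟨s, hs, hts⟩ := exists_nonneg_halfspace_eq hμ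
  have hanti : Antitone a := fun i j hij ↦ hmono i j hij
  have hinfl : infl (m + 1) ⟨0, hn⟩ (halfspace (m + 1) a s) =
      2 * windowCount (Fin.tail a) (a 0) s / 2 ^ (m + 1) :=
    infl_zero_halfspace (ha 0).le s
  rw [hts, hinfl, cubePr_innerBoundary, ← mul_div_assoc, ← mul_div_assoc]
  constructor <;> gcongr
  · have hlower : (windowCount (Fin.tail a) (a 0) s : ℝ) ≤ #(innerBoundary a s) := by
      rw [card_innerBoundary_succ (abs_le_apply_zero hanti ha)]
      exact_mod_cast Nat.le_add_right _ _
    linarith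
  · have hupper : (2 * #(innerBoundary a s) : ℝ) ≤ 7 * windowCount (Fin.tail a) (a 0) s :=
      mod_cast two_mul_card_innerBoundary_le hanti ha hs
    linarith

end
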